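/- arXiv:1806.00673 — 5 statements merged into one kernel-verified Lean document; each statement's English description precedes it below -/
import Mathlib

section
/- Let N be a positive integer, let A ∈ ℂ^{N×N} be Hermitian positive definite, let b ∈ ℂ^N, set V = A + b bᴴ, and for u ∈ ℂ^N define e(u) = Re(uᴴ V u) − 2 Re(uᴴ b) + 1. Then the supremum over all u ∈ ℂ^N and all real ρ > 0 of the quantity log ρ − ρ·e(u) + 1 equals log(1 + Re(bᴴ A⁻¹ b)); the supremum is attained exactly at u = V⁻¹ b and ρ = (1 − Re(bᴴ V⁻¹ b))⁻¹, and at no other point. -/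
open Matrix
open scoped ComplexOrder

/-- Per-user variational (WMMSE) characterization of the rate: for Hermitian positive
definite `A`, `b : ℂ^N`, `V = A + b bᴴ` and `e u = Re(uᴴ V u) - 2 Re(uᴴ b) + 1`,
the supremum over `u ∈ ℂ^N` and real `ρ > 0` of `log ρ - ρ e(u) + 1` equals
`log (1 + Re(bᴴ A⁻¹ b))`, and it is attained exactly at `u = V⁻¹ b`,
`ρ = (1 - Re(bᴴ V⁻¹ b))⁻¹`. -/
theorem wmmse_variational_characterization {N : ℕ} (hN : 0 < N)
    (A : Matrix (Fin N) (Fin N) ℂ) (hA : A.PosDef) (b : Fin N → ℂ) :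
    let V : Matrix (Fin N) (Fin N) ℂ := A + Matrix.vecMulVec b (star b)
    let e : (Fin N → ℂ) → ℝ := fun u =>
      (star u ⬝ᵥ V *ᵥ u).re - 2 * (star u ⬝ᵥ b).re + 1
    let F : (Fin N → ℂ) → ℝ → ℝ := fun u ρ => Real.log ρ - ρ * e u + 1
    let M : ℝ := Real.log (1 + (star b ⬝ᵥ A⁻¹ *ᵥ b).re)
    let ustar : Fin N → ℂ := V⁻¹ *ᵥ b
    let ρstar : ℝ := (1 - (star b ⬝ᵥ V⁻¹ *ᵥ b).re)⁻¹
    (∀ (u : Fin N → ℂ) (ρ : ℝ), 0 < ρ → F u ρ ≤ M) ∧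
      (0 < ρstar ∧ F ustar ρstar = M) ∧
      (∀ (u : Fin N → ℂ) (ρ : ℝ), 0 < ρ → (F u ρ = M ↔ u = ustar ∧ ρ = ρstar)) := by
  intro V e F M w ρs
  have hV : V.PosDef := hA.add_posSemidef (posSemidef_vecMulVec_self_star b)
  have hVdet : IsUnit V.det := (Matrix.isUnit_iff_isUnit_det V).1 hV.isUnit
  have hAdet : IsUnit A.det := (Matrix.isUnit_iff_isUnit_det A).1 hA.isUnit
  have hVw : V *ᵥ w = b := by
    simp only [w, Matrix.mulVec_mulVec, Matrix.mul_nonsing_inv V hVdet, Matrix.one_mulVec]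
  set s : ℂ := star b ⬝ᵥ A⁻¹ *ᵥ b with hs
  have hs0 : 0 ≤ s := hA.inv.posSemidef.dotProduct_mulVec_nonneg b
  obtain ⟨hr0, him⟩ := Complex.le_def.1 hs0
  simp only [Complex.zero_re, Complex.zero_im] at hr0 him
  have hsr : s = (s.re : ℂ) := Complex.ext (by simp) (by simp [← him])
  set r : ℝ := s.re with hr
  have hr1 : 0 < 1 + r := by linarith
  have hVa : V *ᵥ (A⁻¹ *ᵥ b) = (1 + s) • b := by
    have h1 : A *ᵥ (A⁻¹ *ᵥ b) = b := by
      rw [Matrix.mulVec_mulVec, Matrix.mul_nonsing_inv A hAdet, Matrix.one_mulVec]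
    simp only [V]
    rw [Matrix.add_mulVec, h1, Matrix.vecMulVec_mulVec, ← hs]
    ext i
    simp [mul_comm]
    ring
  have haw : A⁻¹ *ᵥ b = (1 + s) • w := by
    have h : V⁻¹ *ᵥ (V *ᵥ (A⁻¹ *ᵥ b)) = V⁻¹ *ᵥ ((1 + s) • b) := by rw [hVa]
    rw [Matrix.mulVec_mulVec, Matrix.nonsing_inv_mul V hVdet, Matrix.one_mulVec,
      Matrix.mulVec_smul] at h
    exact h
  have hbw : s = (1 + s) * (star b ⬝ᵥ w) := by
    conv_lhs => rw [hs, haw, dotProduct_smul, smul_eq_mul]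
  have hbwre : (1 + r) * (star b ⬝ᵥ w).re = r := by
    have h := congrArg Complex.re hbw
    rw [hsr] at h
    simpa using h.symm
  have hρ : 1 - (star b ⬝ᵥ w).re = (1 + r)⁻¹ := by
    field_simp
    linarith
  have hρs : ρs = 1 + r := by
    change (1 - (star b ⬝ᵥ w).re)⁻¹ = 1 + r
    rw [hρ, inv_inv]
  have hre : ∀ x y : Fin N → ℂ, (star x ⬝ᵥ y).re = (star y ⬝ᵥ x).re := by
    intro x y
    have : star x ⬝ᵥ y = star (star y ⬝ᵥ x) := by
      rw [star_dotProduct]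
    rw [this]; simp
  have he : ∀ u, e u = (star (u - w) ⬝ᵥ V *ᵥ (u - w)).re + (1 + r)⁻¹ := by
    intro u
    have h1 : star w ⬝ᵥ V *ᵥ u = star b ⬝ᵥ u := by
      rw [Matrix.dotProduct_mulVec, ← hV.isHermitian.eq, ← Matrix.star_mulVec, hVw]
    have h2 := hre b u
    have h3 := hre b w
    simp only [e, Matrix.mulVec_sub, star_sub, sub_dotProduct, dotProduct_sub, h1, hVw,
      Complex.sub_re]
    linarith
  have hq0 : ∀ u, 0 ≤ (star (u - w) ⬝ᵥ V *ᵥ (u - w)).re := fun u =>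
    (Complex.le_def.1 (hV.posSemidef.dotProduct_mulVec_nonneg (u - w))).1
  have hq1 : ∀ u, u ≠ w → 0 < (star (u - w) ⬝ᵥ V *ᵥ (u - w)).re := fun u hu =>
    (Complex.lt_def.1 (hV.dotProduct_mulVec_pos (sub_ne_zero.2 hu))).1
  have hF : ∀ u ρ, 0 < ρ → F u ρ = M + (Real.log (ρ / (1 + r)) - (ρ / (1 + r) - 1))
      - ρ * (star (u - w) ⬝ᵥ V *ᵥ (u - w)).re := by
    intro u ρ h
    simp only [F, M, he]
    rw [Real.log_div h.ne' hr1.ne']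
    ring
  have hle : ∀ u ρ, 0 < ρ → F u ρ ≤ M := by
    intro u ρ h
    have h1 := Real.log_le_sub_one_of_pos (div_pos h hr1)
    have h2 := mul_nonneg h.le (hq0 u)
    rw [hF u ρ h]; linarith
  have hat : F w (1 + r) = M := by
    rw [hF w _ hr1, div_self hr1.ne']; simp
  refine ⟨hle, ⟨hρs ▸ hr1, hρs ▸ hat⟩, ?_⟩
  intro u ρ h
  constructor
  · intro hFM
    rw [hF u ρ h] at hFM
    have h1 := Real.log_le_sub_one_of_pos (div_pos h hr1)
    have h2 := mul_nonneg h.le (hq0 u)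
    constructor
    · by_contra hu
      have := mul_pos h (hq1 u hu)
      linarith
    · by_contra hne
      have hx : ρ / (1 + r) ≠ 1 := by
        intro h'
        rw [div_eq_one_iff_eq hr1.ne'] at h'
        exact hne (h'.trans hρs.symm)
      have := Real.log_lt_sub_one_of_pos (div_pos h hr1) hx
      linarith
  · rintro ⟨rfl, rfl⟩
    rw [hρs]; exact hat
end

section
/- Consider K users and T transmit antennas, with channel matrices H_k ∈ ℂ^{N×T}, weights α_k ≥ 0, noise variance σ² > 0, SNR gap Γ_m > 0, quantizer gap Γ_q > 0, per-antenna power budgets P_t ≥ 0, and per-antenna backhaul capacities C_t satisfying 2^{C_t} ≥ 1 + Γ_q. For beamformers w = (w_1,…,w_K) with each w_k ∈ ℂ^T and a vector q ∈ ℝ^T of nonnegative quantization noise levels, let R_k(w,q) = log(1 + SINR_k(w,q)/Γ_m) where SINR_k(w,q) = Re(w_kᴴ H_kᴴ (Σ_{j≠k} H_k w_j w_jᴴ H_kᴴ + σ² I + H_k diag(q) H_kᴴ)⁻¹ H_k w_k). Let q*_t = Γ_q P_t/(2^{C_t} − 1). Then the supremum of Σ_k α_k R_k(w,q) over all (w,q)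 satisfying, for each antenna t, Σ_k |w_k(t)|² + q_t ≤ P_t and q_t ≥ q*_t, equals the supremum of Σ_k α_k R_k(w,q*) over all w satisfying, for each t, Σ_k |w_k(t)|² ≤ P_t (1 − Γ_q/(2^{C_t} − 1)). -/
open Matrix
open scoped ComplexOrder

lemma aux_inv_diff {N : ℕ} {A D : Matrix (Fin N) (Fin N) ℂ} (hA : A.PosDef)
    (hD : D.PosSemidef) : (A⁻¹ - (A + D)⁻¹).PosSemidef := by
  have hB : (A + D).PosDef := hA.add_posSemidef hD
  have uA : IsUnit A.det := (Matrix.isUnit_iff_isUnit_det A).1 hA.isUnit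
  have uB : IsUnit (A + D).det := (Matrix.isUnit_iff_isUnit_det _).1 hB.isUnit
  have h1 : (A + D) * A⁻¹ * (A + D) - (A + D) = D + D * A⁻¹ * D := by
    have e1 : A * A⁻¹ = 1 := Matrix.mul_nonsing_inv A uA
    have e2 : A⁻¹ * A = 1 := Matrix.nonsing_inv_mul A uA
    rw [add_mul, e1, add_mul, mul_add, mul_add, mul_assoc D A⁻¹ A, e2]
    simp only [one_mul, mul_one]
    abel
  have h2 : A⁻¹ - (A + D)⁻¹ = (A + D)⁻¹ * (D + D * A⁻¹ * D) * ((A + D)⁻¹)ᴴ := by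
    rw [hB.inv.isHermitian.eq, ← h1]
    generalize A + D = B at uB
    have e1 : B * B⁻¹ = 1 := Matrix.mul_nonsing_inv B uB
    have e2 : B⁻¹ * B = 1 := Matrix.nonsing_inv_mul B uB
    calc A⁻¹ - B⁻¹ = (B⁻¹ * B) * A⁻¹ * (B * B⁻¹) - (B⁻¹ * B) * B⁻¹ := by
          rw [e1, e2]; simp
      _ = _ := by noncomm_ring
  rw [h2]
  apply PosSemidef.mul_mul_conjTranspose_same
  apply hD.add
  have := hA.inv.posSemidef.mul_mul_conjTranspose_same D
  rwa [hD.isHermitian.eq] at this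

lemma aux_sSup {S U : Set ℝ} (hne : U.Nonempty) (hsub : U ⊆ S)
    (h : ∀ r ∈ S, ∃ r' ∈ U, r ≤ r') : sSup S = sSup U := by
  by_cases hb : BddAbove U
  · obtain ⟨b, hb'⟩ := id hb
    have hS : BddAbove S := ⟨b, fun r hr => by
      obtain ⟨r', h1, h2⟩ := h r hr
      exact h2.trans (hb' h1)⟩
    apply le_antisymm
    · apply csSup_le (hne.mono hsub)
      intro r hr
      obtain ⟨r', h1, h2⟩ := h r hr
      exact h2.trans (le_csSup hb h1)
    · exact csSup_le_csSup hS hne hsub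
  · have hS : ¬ BddAbove S := fun h' => hb (h'.mono hsub)
    rw [Real.sSup_of_not_bddAbove hb, Real.sSup_of_not_bddAbove hS]

lemma aux_diag {N T : ℕ} (H : Matrix (Fin N) (Fin T) ℂ) (q : Fin T → ℝ) (hq : ∀ t, 0 ≤ q t) :
    (H * Matrix.diagonal (fun t => (q t : ℂ)) * Hᴴ).PosSemidef := by
  apply PosSemidef.mul_mul_conjTranspose_same
  apply PosSemidef.diagonal
  intro t
  simpa using hq t

lemma aux_base {ι : Type*} {N : ℕ} (s : Finset ι) (v : ι → Fin N → ℂ) (σ2 : ℝ) (hσ : 0 < σ2) :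
    ((∑ j ∈ s, Matrix.vecMulVec (v j) (star (v j))) +
          (σ2 : ℂ) • (1 : Matrix (Fin N) (Fin N) ℂ)).PosDef := by
  apply PosDef.posSemidef_add
  · exact posSemidef_sum s fun j _ => posSemidef_vecMulVec_self_star _
  · exact PosDef.one.smul (by exact_mod_cast hσ)

lemma aux_quad {N T : ℕ} (H : Matrix (Fin N) (Fin T) ℂ) (M : Matrix (Fin N) (Fin N) ℂ)
    (hM : M.PosSemidef) (w : Fin T → ℂ) : 0 ≤ (star w ⬝ᵥ (Hᴴ * M * H) *ᵥ w).re :=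
  (Complex.le_def.1 ((hM.conjTranspose_mul_mul_same H).dotProduct_mulVec_nonneg w)).1

lemma aux_mono {N T : ℕ} (H : Matrix (Fin N) (Fin T) ℂ) (A : Matrix (Fin N) (Fin N) ℂ)
    (hA : A.PosDef) (w : Fin T → ℂ) (q p : Fin T → ℝ) (hp : ∀ t, 0 ≤ p t)
    (hpq : ∀ t, p t ≤ q t) :
    (star w ⬝ᵥ (Hᴴ * (A + H * Matrix.diagonal (fun t => (q t : ℂ)) * Hᴴ)⁻¹ * H) *ᵥ w).re ≤
    (star w ⬝ᵥ (Hᴴ * (A + H * Matrix.diagonal (fun t => (p t : ℂ)) * Hᴴ)⁻¹ * H) *ᵥ w).re := by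
  have hd := aux_diag H (fun t => q t - p t) (fun t => sub_nonneg.2 (hpq t))
  have hAp := hA.add_posSemidef (aux_diag H p hp)
  have key := aux_quad H _ (aux_inv_diff hAp hd) w
  have e : A + H * Matrix.diagonal (fun t => (p t : ℂ)) * Hᴴ +
      H * Matrix.diagonal (fun t => ((q t - p t : ℝ) : ℂ)) * Hᴴ =
      A + H * Matrix.diagonal (fun t => (q t : ℂ)) * Hᴴ := by
    rw [add_assoc, ← Matrix.add_mul, ← Matrix.mul_add, Matrix.diagonal_add]
    simp
  rw [e, Matrix.mul_sub, Matrix.sub_mul, Matrix.sub_mulVec, dotProduct_sub, Complex.sub_re] at key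
  linarith

/-- Reduction of the weighted sum rate maximization for the compression strategy with
fixed quantization codebooks: since the objective is nonincreasing in each quantization
noise level `q t` and the quantization constraint `q t ≥ Γq P t / (2^(C t) - 1)` is
active at an optimum, the supremum over `(w, q)` equals the supremum over beamformers
`w` alone under the modified per-antenna power constraints, with `q` fixed at `q*`. -/
theorem fixed_quantization_reduction {K T N : ℕ}
    (H : Fin K → Matrix (Fin N) (Fin T) ℂ)
    (α : Fin K → ℝ) (hα : ∀ k, 0 ≤ α k)
    (σ2 Γm Γq : ℝ) (hσ : 0 < σ2) (hΓm : 0 < Γm) (hΓq : 0 < Γq)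
    (P : Fin T → ℝ) (hP : ∀ t, 0 ≤ P t)
    (C : Fin T → ℝ) (hC : ∀ t, 1 + Γq ≤ (2 : ℝ) ^ (C t)) :
    let SINR : (Fin K → Fin T → ℂ) → (Fin T → ℝ) → Fin K → ℝ := fun w q k =>
      (star (w k) ⬝ᵥ ((H k)ᴴ *
        ((∑ j ∈ Finset.univ.erase k,
            Matrix.vecMulVec (H k *ᵥ w j) (star (H k *ᵥ w j))) +
          (σ2 : ℂ) • (1 : Matrix (Fin N) (Fin N) ℂ) +
          H k * Matrix.diagonal (fun t => (q t : ℂ)) * (H k)ᴴ)⁻¹ * H k) *ᵥ w k).re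
    let R : (Fin K → Fin T → ℂ) → (Fin T → ℝ) → Fin K → ℝ := fun w q k =>
      Real.log (1 + SINR w q k / Γm)
    let qstar : Fin T → ℝ := fun t => Γq * P t / ((2 : ℝ) ^ (C t) - 1)
    sSup {r : ℝ | ∃ (w : Fin K → Fin T → ℂ) (q : Fin T → ℝ),
        (∀ t, 0 ≤ q t) ∧
        (∀ t, (∑ k, ‖w k t‖ ^ 2) + q t ≤ P t) ∧
        (∀ t, qstar t ≤ q t) ∧
        r = ∑ k, α k * R w q k} =
      sSup {r : ℝ | ∃ w : Fin K → Fin T → ℂ,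
        (∀ t, (∑ k, ‖w k t‖ ^ 2) ≤ P t * (1 - Γq / ((2 : ℝ) ^ (C t) - 1))) ∧
        r = ∑ k, α k * R w qstar k} := by
  intro SINR R qstar
  have hc : ∀ t, 0 < (2 : ℝ) ^ (C t) - 1 := fun t => by linarith [hC t]
  have hq0 : ∀ t, 0 ≤ qstar t := fun t =>
    div_nonneg (mul_nonneg hΓq.le (hP t)) (hc t).le
  have hid : ∀ t, P t * (1 - Γq / ((2 : ℝ) ^ (C t) - 1)) = P t - qstar t := fun t => by
    simp only [qstar]; ring
  have hr1 : ∀ t, Γq / ((2 : ℝ) ^ (C t) - 1) ≤ 1 := fun t => by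
    rw [div_le_one (hc t)]; linarith [hC t]
  apply aux_sSup
  · refine ⟨_, 0, fun t => ?_, rfl⟩
    simpa using mul_nonneg (hP t) (sub_nonneg.2 (hr1 t))
  · rintro r ⟨w, hw, rfl⟩
    refine ⟨w, qstar, hq0, fun t => ?_, fun t => le_rfl, rfl⟩
    have := hw t
    rw [hid] at this
    linarith
  · rintro r ⟨w, q, hq, hw, hqs, rfl⟩
    refine ⟨_, ⟨w, fun t => ?_, rfl⟩, ?_⟩
    · rw [hid]; linarith [hw t, hqs t]
    · apply Finset.sum_le_sum
      intro k _
      apply mul_le_mul_of_nonneg_left _ (hα k)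
      have hA := aux_base (Finset.univ.erase k) (fun j => H k *ᵥ w j) σ2 hσ
      have h0 : 0 ≤ SINR w q k :=
        aux_quad (H k) _ (hA.add_posSemidef (aux_diag (H k) q hq)).inv.posSemidef (w k)
      have h1 : SINR w q k ≤ SINR w qstar k := aux_mono (H k) _ hA (w k) q qstar hq0 hqs
      have h2 : SINR w q k / Γm ≤ SINR w qstar k / Γm := by gcongr
      have h3 : 0 ≤ SINR w q k / Γm := div_nonneg h0 hΓm.le
      exact Real.log_le_log (by linarith) (by linarith)
end

section
/- Consider the hybrid data-sharing and compression problem with L single-antenna BSs and K single-antenna users: channels h_k ∈ ℂ^L with every component h_k(l) ≠ 0, weights α_k > 0, noise variance σ² > 0, SNR gap Γ_m > 0, quantizer gap Γ_q > 0, per-BS powers P_l > 0, per-BS backhaul capacities C_l > 0, and fixed positive rate estimates R̂_k > 0. The variables are beamformers w^c_k, w^d_k ∈ ℂ^L for each user k (with w_k = w^c_k + w^d_k) and quantization noise levels q ∈ ℝ^L with q_l > 0; a point is feasible if for every BS l: Σ_k |w_k(l)|² + q_l ≤ P_l and Σ_k 1{w^d_k(l) ≠ 0}·R̂_k + log(1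 + Γ_q Σ_k |w^c_k(l)|² / q_l) ≤ C_l. The objective is Σ_k α_k log(1 + SINR_k/Γ_m) with SINR_k = |h_kᴴ w_k|² / (Σ_{j≠k} |h_kᴴ w_j|² + σ² + Σ_l q_l |h_k(l)|²). Then every feasible point that globally maximizes the objective satisfies, for every BS l and every user k, w^c_k(l) = 0 or w^d_k(l) = 0 (or both). -/
open Matrix

set_option maxHeartbeats 1000000 in
/-- Proposition 1 of the paper: in the hybrid data-sharing and compression problem
(with the user rates in the backhaul constraint fixed at `R̂`), every feasible point
that globally maximizes the weighted sum rate objective has, for every BS `l` and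
every user `k`, either a zero compression beamforming coefficient `wᶜ k l = 0` or a
zero data-sharing beamforming coefficient `wᵈ k l = 0` (or both). -/
theorem hybrid_no_simultaneous_sharing_and_compression {L K : ℕ}
    (h : Fin K → Fin L → ℂ) (hne : ∀ k l, h k l ≠ 0)
    (α : Fin K → ℝ) (hα : ∀ k, 0 < α k)
    (σ2 Γm Γq : ℝ) (hσ : 0 < σ2) (hΓm : 0 < Γm) (hΓq : 0 < Γq)
    (P : Fin L → ℝ) (hP : ∀ l, 0 < P l)
    (C : Fin L → ℝ) (hC : ∀ l, 0 < C l)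
    (Rhat : Fin K → ℝ) (hR : ∀ k, 0 < Rhat k) :
    let feasible : (Fin K → Fin L → ℂ) → (Fin K → Fin L → ℂ) → (Fin L → ℝ) → Prop :=
      fun wc wd q =>
        (∀ l, 0 < q l) ∧
        (∀ l, (∑ k, ‖wc k l + wd k l‖ ^ 2) + q l ≤ P l) ∧
        (∀ l, (∑ k, if wd k l ≠ 0 then Rhat k else 0) +
          Real.log (1 + Γq * (∑ k, ‖wc k l‖ ^ 2) / q l) ≤ C l)
    let obj : (Fin K → Fin L → ℂ) → (Fin K → Fin L → ℂ) → (Fin L → ℝ) → ℝ :=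
      fun wc wd q => ∑ k, α k * Real.log (1 +
        (‖star (h k) ⬝ᵥ (fun l => wc k l + wd k l)‖ ^ 2 /
          ((∑ j ∈ Finset.univ.erase k,
              ‖star (h k) ⬝ᵥ (fun l => wc j l + wd j l)‖ ^ 2) +
            σ2 + ∑ l, q l * ‖h k l‖ ^ 2)) / Γm)
    ∀ (wc wd : Fin K → Fin L → ℂ) (q : Fin L → ℝ),
      feasible wc wd q →
      (∀ (wc' wd' : Fin K → Fin L → ℂ) (q' : Fin L → ℝ),
        feasible wc' wd' q' → obj wc' wd' q' ≤ obj wc wd q) →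
      ∀ (l : Fin L) (k : Fin K), wc k l = 0 ∨ wd k l = 0 := by
  intro feasible obj wc wd q hf hopt l k
  by_contra hcon
  rw [not_or] at hcon
  obtain ⟨hc0, hd0⟩ := hcon
  obtain ⟨hq, hpow, hbk⟩ := hf
  by_cases hall : ∀ j, star (h j) ⬝ᵥ (fun l => wc j l + wd j l) = 0
  · -- objective is zero: build a strictly better point
    have hobj0 : obj wc wd q = 0 := by
      simp only [obj]
      apply Finset.sum_eq_zero
      intro j _
      rw [hall j]
      simp
    have hexp : 0 < Real.exp (C l) - 1 := by
      have := Real.add_one_le_exp (C l)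
      have := hC l
      linarith
    obtain ⟨e, he0, he1, he2⟩ : ∃ e : ℝ, 0 < e ∧ e ^ 2 ≤ P l / 2 ∧
        Γq * e ^ 2 / (P l / 2) ≤ Real.exp (C l) - 1 := by
      have hPl := hP l
      have hm : 0 < min (P l / 2) ((Real.exp (C l) - 1) * (P l / 2) / Γq) := by
        apply lt_min <;> positivity
      refine ⟨Real.sqrt (min (P l / 2) ((Real.exp (C l) - 1) * (P l / 2) / Γq)),
        Real.sqrt_pos.mpr hm, ?_, ?_⟩
      · rw [Real.sq_sqrt hm.le]
        exact min_le_left _ _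
      · rw [Real.sq_sqrt hm.le, div_le_iff₀ (by positivity), mul_comm, ← le_div_iff₀ hΓq]
        exact min_le_right _ _
    set w' : Fin K → Fin L → ℂ := fun j m => if j = k then (if m = l then (e : ℂ) else 0) else 0
      with hw'
    have hsum : ∀ m, (∑ j, ‖w' j m‖ ^ 2) = if m = l then e ^ 2 else 0 := by
      intro m
      rw [Finset.sum_eq_single k]
      · by_cases hm : m = l <;> simp [hw', hm]
      · intro j _ hj
        simp [hw', hj]
      · simp
    have hfe : feasible w' (fun _ _ => 0) (fun m => P m / 2) := by
      refine ⟨fun m => half_pos (hP m), ?_, ?_⟩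
      · intro m
        simp only [add_zero]
        rw [hsum m]
        by_cases hm : m = l
        · subst hm
          simp only [if_true]
          linarith
        · simp only [hm, if_false]
          have := hP m
          linarith
      · intro m
        rw [hsum m]
        by_cases hm : m = l
        · subst hm
          simp only [ne_eq, not_true_eq_false, if_false, Finset.sum_const_zero, zero_add, if_true]
          have hPm := hP m
          rw [Real.log_le_iff_le_exp (by positivity)]
          linarith
        · simp [hm, (hC m).le]
    have hle := hopt _ _ _ hfe
    rw [hobj0] at hle
    have hpos : 0 < obj w' (fun _ _ => 0) (fun m => P m / 2) := by
      have hD : ∀ j, 0 < (∑ i ∈ Finset.univ.erase j,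
              ‖star (h j) ⬝ᵥ (fun l => w' i l + 0)‖ ^ 2) +
            σ2 + ∑ l, P l / 2 * ‖h j l‖ ^ 2 := by
        intro j
        have h1 : 0 ≤ ∑ i ∈ Finset.univ.erase j,
              ‖star (h j) ⬝ᵥ (fun l => w' i l + 0)‖ ^ 2 :=
          Finset.sum_nonneg fun _ _ => by positivity
        have h2 : 0 ≤ ∑ l, P l / 2 * ‖h j l‖ ^ 2 :=
          Finset.sum_nonneg fun m _ => by
            have := hP m
            positivity
        linarith
      have hgen : ∀ a D : ℝ, 0 < a → 0 < D → 1 < 1 + a / D / Γm := by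
        intro a D ha hD
        exact lt_add_of_pos_right _ (by positivity)
      have hgen' : ∀ a D : ℝ, 0 ≤ a → 0 < D → 1 ≤ 1 + a / D / Γm := by
        intro a D ha hD
        exact le_add_of_nonneg_right (by positivity)
      simp only [obj]
      apply Finset.sum_pos'
      · intro j _
        exact mul_nonneg (hα j).le (Real.log_nonneg (hgen' _ _ (sq_nonneg _) (hD j)))
      · refine ⟨k, Finset.mem_univ _, mul_pos (hα k) (Real.log_pos ?_)⟩
        have h3 : star (h k) ⬝ᵥ (fun l => w' k l + 0) ≠ 0 := by
          simp [hw', dotProduct, hne k l, he0.ne']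
        have h4 : 0 < ‖star (h k) ⬝ᵥ (fun l => w' k l + 0)‖ := norm_pos_iff.mpr h3
        exact hgen _ _ (pow_pos h4 2) (hD k)
    linarith
  · push Not at hall
    obtain ⟨k₀, hk₀⟩ := hall
    set wc' : Fin K → Fin L → ℂ := fun j m => if j = k ∧ m = l then 0 else wc j m with hwc'
    set wd' : Fin K → Fin L → ℂ :=
      fun j m => if j = k ∧ m = l then wc j m + wd j m else wd j m with hwd'
    have hadd : ∀ j m, wc' j m + wd' j m = wc j m + wd j m := by
      intro j m
      by_cases hjm : j = k ∧ m = l <;> simp [hwc', hwd', hjm]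
    have hSlt : ∑ j, ‖wc' j l‖ ^ 2 < ∑ j, ‖wc j l‖ ^ 2 := by
      apply Finset.sum_lt_sum
      · intro j _
        by_cases hj : j = k <;> simp [hwc', hj]
      · refine ⟨k, Finset.mem_univ _, ?_⟩
        have : 0 < ‖wc k l‖ := norm_pos_iff.mpr hc0
        simp only [hwc', and_self, if_true, norm_zero]
        exact pow_lt_pow_left₀ this le_rfl two_ne_zero
    have hS'0 : 0 ≤ ∑ j, ‖wc' j l‖ ^ 2 := Finset.sum_nonneg fun _ _ => by positivity
    obtain ⟨t, ht0, ht1, htS⟩ : ∃ t : ℝ, 0 < t ∧ t < 1 ∧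
        ∑ j, ‖wc' j l‖ ^ 2 ≤ t * ∑ j, ‖wc j l‖ ^ 2 := by
      have hS : 0 < ∑ j, ‖wc j l‖ ^ 2 := lt_of_le_of_lt hS'0 hSlt
      refine ⟨max ((∑ j, ‖wc' j l‖ ^ 2) / ∑ j, ‖wc j l‖ ^ 2) (1 / 2), ?_, ?_, ?_⟩
      · exact lt_max_of_lt_right (by norm_num)
      · exact max_lt ((div_lt_one hS).mpr hSlt) (by norm_num)
      · rw [← div_le_iff₀ hS]
        exact le_max_left _ _
    set q' : Fin L → ℝ := fun m => if m = l then t * q m else q m with hq'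
    have hq'0 : ∀ m, 0 < q' m := by
      intro m
      have := hq m
      simp only [hq']
      split_ifs <;> positivity
    have hq'le : ∀ m, q' m ≤ q m := by
      intro m
      have := hq m
      simp only [hq']
      split_ifs
      · nlinarith
      · exact le_rfl
    have hq'lt : q' l < q l := by
      have := hq l
      simp only [hq', if_true]
      nlinarith
    have hfe : feasible wc' wd' q' := by
      refine ⟨hq'0, ?_, ?_⟩
      · intro m
        simp only [hadd]
        linarith [hpow m, hq'le m]
      · intro m
        refine le_trans (add_le_add ?_ ?_) (hbk m)
        · apply Finset.sum_le_sum
          intro j _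
          by_cases hjm : j = k ∧ m = l
          · obtain ⟨rfl, rfl⟩ := hjm
            rw [if_pos hd0]
            split_ifs
            · exact le_rfl
            · exact (hR _).le
          · simp [hwd', hjm]
        · have hqm := hq m
          have hqm' := hq'0 m
          have hs : 0 ≤ ∑ j, ‖wc' j m‖ ^ 2 := Finset.sum_nonneg fun _ _ => by positivity
          apply Real.log_le_log (by positivity)
          rw [mul_div_assoc, mul_div_assoc]
          have : (∑ j, ‖wc' j m‖ ^ 2) / q' m ≤ (∑ j, ‖wc j m‖ ^ 2) / q m := by
            by_cases hm : m = l
            · subst hm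
              rw [div_le_div_iff₀ hqm' hqm]
              simp only [hq', if_true]
              nlinarith
            · simp [hwc', hq', hm]
          have := mul_le_mul_of_nonneg_left this hΓq.le
          linarith
    have hle := hopt _ _ _ hfe
    have hlt : obj wc wd q < obj wc' wd' q' := by
      simp only [obj, hadd]
      have hI : ∀ j, 0 ≤ ∑ i ∈ Finset.univ.erase j,
              ‖star (h j) ⬝ᵥ (fun l => wc i l + wd i l)‖ ^ 2 :=
        fun j => Finset.sum_nonneg fun _ _ => by positivity
      have hN : ∀ j, 0 ≤ ∑ m, q' m * ‖h j m‖ ^ 2 :=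
        fun j => Finset.sum_nonneg fun m _ => by
          have := hq'0 m
          positivity
      have hNlt : ∀ j, ∑ m, q' m * ‖h j m‖ ^ 2 < ∑ m, q m * ‖h j m‖ ^ 2 := by
        intro j
        apply Finset.sum_lt_sum
        · intro m _
          exact mul_le_mul_of_nonneg_right (hq'le m) (by positivity)
        · refine ⟨l, Finset.mem_univ _, ?_⟩
          have : 0 < ‖h j l‖ := norm_pos_iff.mpr (hne j l)
          exact mul_lt_mul_of_pos_right hq'lt (by positivity)
      have key : ∀ a b c d : ℝ, 0 ≤ a → 0 ≤ b → 0 ≤ c → c < d →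
          Real.log (1 + a / (b + σ2 + d) / Γm) ≤ Real.log (1 + a / (b + σ2 + c) / Γm) := by
        intro a b c d ha hb hc hcd
        have hd : 0 ≤ d := hc.trans hcd.le
        apply Real.log_le_log (by positivity)
        gcongr
      have key' : ∀ a b c d : ℝ, 0 < a → 0 ≤ b → 0 ≤ c → c < d →
          Real.log (1 + a / (b + σ2 + d) / Γm) < Real.log (1 + a / (b + σ2 + c) / Γm) := by
        intro a b c d ha hb hc hcd
        have hd : 0 ≤ d := hc.trans hcd.le
        apply Real.log_lt_log (by positivity)
        gcongr
      apply Finset.sum_lt_sum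
      · intro j _
        exact mul_le_mul_of_nonneg_left (key _ _ _ _ (sq_nonneg _) (hI j) (hN j) (hNlt j))
          (hα j).le
      · refine ⟨k₀, Finset.mem_univ _, ?_⟩
        have : 0 < ‖star (h k₀) ⬝ᵥ (fun l => wc k₀ l + wd k₀ l)‖ := norm_pos_iff.mpr hk₀
        exact mul_lt_mul_of_pos_left (key' _ _ _ _ (pow_pos this 2) (hI k₀) (hN k₀) (hNlt k₀))
          (hα k₀)
    linarith
end

section
/- In the hybrid data-sharing and compression problem (L single-antenna BSs, K single-antenna users, channels h_k ∈ ℂ^L, weights α_k ≥ 0, noise variance σ² > 0, SNR gap Γ_m > 0, quantizer gap Γ_q > 0, powers P_l, backhauls C_l, fixed rates R̂_k ≥ 0, variables w^c_k, w^d_k ∈ ℂ^L and q ∈ ℝ^L with q_l > 0, feasibility meaning Σ_k |w^c_k(l) + w^d_k(l)|² + q_l ≤ P_l and Σ_k 1{w^d_k(l) ≠ 0}·R̂_k + log(1 + Γ_q Σ_k |w^c_k(l)|²/q_l) ≤ C_l for all l, and objective Σ_k α_k log(1 + SINR_k/Γ_m) with SINR_k = |h_kᴴ w_k|²/(Σ_{j≠k}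 |h_kᴴ w_j|² + σ² + Σ_l q_l |h_k(l)|²) computed from w_k = w^c_k + w^d_k): suppose (w^c, w^d, q) is feasible and for some BS l₀ and user k₀ both w^c_{k₀}(l₀) ≠ 0 and w^d_{k₀}(l₀) ≠ 0. Then the point obtained by replacing w^d_{k₀}(l₀) with w^d_{k₀}(l₀) + w^c_{k₀}(l₀) and w^c_{k₀}(l₀) with 0 (all other variables unchanged) is feasible, has exactly the same objective value, and the left-hand side of the backhaul constraint at BS l₀ is strictly smaller than before. -/
open Matrix

/-- Key step in the proof of Proposition 1: if at a feasible point of the hybrid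
problem some user `k₀` has both a nonzero compression coefficient and a nonzero
data-sharing coefficient at some BS `l₀`, then moving the compression coefficient
into the data-sharing coefficient (zeroing the former) yields a feasible point with
exactly the same objective value and a strictly smaller left-hand side of the
backhaul constraint at BS `l₀`. -/
theorem hybrid_transfer_step {L K : ℕ}
    (h : Fin K → Fin L → ℂ)
    (α : Fin K → ℝ) (hα : ∀ k, 0 ≤ α k)
    (σ2 Γm Γq : ℝ) (hσ : 0 < σ2) (hΓm : 0 < Γm) (hΓq : 0 < Γq)
    (P : Fin L → ℝ) (C : Fin L → ℝ)
    (Rhat : Fin K → ℝ) (hR : ∀ k, 0 ≤ Rhat k) :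
    let feasible : (Fin K → Fin L → ℂ) → (Fin K → Fin L → ℂ) → (Fin L → ℝ) → Prop :=
      fun wc wd q =>
        (∀ l, 0 < q l) ∧
        (∀ l, (∑ k, ‖wc k l + wd k l‖ ^ 2) + q l ≤ P l) ∧
        (∀ l, (∑ k, if wd k l ≠ 0 then Rhat k else 0) +
          Real.log (1 + Γq * (∑ k, ‖wc k l‖ ^ 2) / q l) ≤ C l)
    let obj : (Fin K → Fin L → ℂ) → (Fin K → Fin L → ℂ) → (Fin L → ℝ) → ℝ :=
      fun wc wd q => ∑ k, α k * Real.log (1 +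
        (‖star (h k) ⬝ᵥ (fun l => wc k l + wd k l)‖ ^ 2 /
          ((∑ j ∈ Finset.univ.erase k,
              ‖star (h k) ⬝ᵥ (fun l => wc j l + wd j l)‖ ^ 2) +
            σ2 + ∑ l, q l * ‖h k l‖ ^ 2)) / Γm)
    ∀ (wc wd : Fin K → Fin L → ℂ) (q : Fin L → ℝ),
      feasible wc wd q →
      ∀ (k₀ : Fin K) (l₀ : Fin L), wc k₀ l₀ ≠ 0 → wd k₀ l₀ ≠ 0 →
      let wc' : Fin K → Fin L → ℂ := fun k l => if k = k₀ ∧ l = l₀ then 0 else wc k l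
      let wd' : Fin K → Fin L → ℂ := fun k l =>
        if k = k₀ ∧ l = l₀ then wd k l + wc k l else wd k l
      feasible wc' wd' q ∧
        obj wc' wd' q = obj wc wd q ∧
        (∑ k, if wd' k l₀ ≠ 0 then Rhat k else 0) +
            Real.log (1 + Γq * (∑ k, ‖wc' k l₀‖ ^ 2) / q l₀) <
          (∑ k, if wd k l₀ ≠ 0 then Rhat k else 0) +
            Real.log (1 + Γq * (∑ k, ‖wc k l₀‖ ^ 2) / q l₀) := by
  intro feasible obj wc wd q hf k₀ l₀ hc hd wc' wd'
  have hsum : ∀ k l, wc' k l + wd' k l = wc k l + wd k l := by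
    intro k l
    simp only [wc', wd']
    split_ifs
    · ring
    · rfl
  obtain ⟨hq, hP, hB⟩ := hf
  have hstrict : (∑ k, if wd' k l₀ ≠ 0 then Rhat k else 0) +
            Real.log (1 + Γq * (∑ k, ‖wc' k l₀‖ ^ 2) / q l₀) <
          (∑ k, if wd k l₀ ≠ 0 then Rhat k else 0) +
            Real.log (1 + Γq * (∑ k, ‖wc k l₀‖ ^ 2) / q l₀) := by
    apply add_lt_add_of_le_of_lt
    · apply Finset.sum_le_sum
      intro k _
      by_cases hk : k = k₀
      · subst hk
        rw [if_pos hd]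
        split_ifs
        · exact le_rfl
        · exact hR k
      · have e : wd' k l₀ = wd k l₀ := by simp [wd', hk]
        simp only [e]
        exact le_rfl
    · have hlt : ∑ k, ‖wc' k l₀‖ ^ 2 < ∑ k, ‖wc k l₀‖ ^ 2 := by
        apply Finset.sum_lt_sum
        · intro k _
          simp only [wc']
          split_ifs
          · simp
          · exact le_rfl
        · refine ⟨k₀, Finset.mem_univ _, ?_⟩
          have : 0 < ‖wc k₀ l₀‖ := norm_pos_iff.mpr hc
          simp only [wc', and_self, if_true, norm_zero]
          have h2 := pow_pos this 2
          simpa using h2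
      have h0 : 0 ≤ ∑ k, ‖wc' k l₀‖ ^ 2 := Finset.sum_nonneg fun _ _ => by positivity
      have hql := hq l₀
      apply Real.log_lt_log
      · positivity
      · gcongr
  refine ⟨⟨hq, ?_, ?_⟩, ?_, hstrict⟩
  · intro l
    simp only [hsum]
    exact hP l
  · intro l
    by_cases hl : l = l₀
    · subst hl
      exact hstrict.le.trans (hB l)
    · have e1 : ∀ k, wd' k l = wd k l := by intro k; simp [wd', hl]
      have e2 : ∀ k, wc' k l = wc k l := by intro k; simp [wc', hl]
      simp only [e1, e2]
      exact hB l
  · simp only [obj, hsum]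
end

section
/- Consider K users and T transmit antennas with channel matrices H_k ∈ ℂ^{N×T}, weights α_k ≥ 0, noise variance σ² > 0, and SNR gap Γ_m > 0. For beamformers w = (w_1,…,w_K), w_k ∈ ℂ^T, define V_k(w) = Γ_m(Σ_{j≠k} H_k w_j w_jᴴ H_kᴴ + σ² I) + H_k w_k w_kᴴ H_kᴴ, and for u ∈ ℂ^N define e_k(w,u) = Re(uᴴ V_k(w) u) − 2 Re(uᴴ H_k w_k) + 1; define R_k(w) = log(1 + SINR_k(w)/Γ_m) with SINR_k(w) = Re(w_kᴴ H_kᴴ (Σ_{j≠k} H_k w_j w_jᴴ H_kᴴ + σ² I)⁻¹ H_k w_k). Then for every nonempty set S ⊆ (ℂ^T)^K of beamformer tuples, the supremum over w ∈ S of Σ_k α_k R_k(w) equals the supremum over w ∈ S, u_1,…,u_K ∈ ℂ^N, and ρ_1,…,ρ_K ∈ ℝ_{>0} of Σ_k α_k (log ρ_k − ρ_k e_k(w,u_k) + 1). -/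
open Matrix
open scoped ComplexOrder

lemma wmmse_e_expand {N : ℕ} (J : Matrix (Fin N) (Fin N) ℂ) (h u : Fin N → ℂ) (Γm : ℝ) :
    (star u ⬝ᵥ ((Γm : ℂ) • J + Matrix.vecMulVec h (star h)) *ᵥ u).re =
      Γm * (star u ⬝ᵥ J *ᵥ u).re + ((star u ⬝ᵥ h).re ^ 2 + (star u ⬝ᵥ h).im ^ 2) := by
  have h1 : star h ⬝ᵥ u = star (star u ⬝ᵥ h) := by
    rw [← Matrix.star_dotProduct_star, star_star, dotProduct_comm]
  rw [Matrix.add_mulVec, dotProduct_add, Matrix.smul_mulVec, dotProduct_smul,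
    Matrix.vecMulVec_mulVec, h1]
  simp
  ring

lemma wmmse_quad {N : ℕ} (J : Matrix (Fin N) (Fin N) ℂ) (hJ : J.PosDef) (g u : Fin N → ℂ)
    (c : ℝ) :
    0 ≤ (star u ⬝ᵥ J *ᵥ u).re - 2 * c * (star u ⬝ᵥ J *ᵥ g).re
      + c ^ 2 * (star g ⬝ᵥ J *ᵥ g).re := by
  have h0 := hJ.posSemidef.re_dotProduct_nonneg (u - (c : ℂ) • g)
  have h1 : star g ⬝ᵥ J *ᵥ u = star (star u ⬝ᵥ J *ᵥ g) := by
    rw [Matrix.star_dotProduct, Matrix.star_mulVec, hJ.isHermitian.eq, Matrix.dotProduct_mulVec]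
  have h2 : star (u - (c : ℂ) • g) ⬝ᵥ J *ᵥ (u - (c : ℂ) • g) =
      star u ⬝ᵥ J *ᵥ u - c * (star u ⬝ᵥ J *ᵥ g) - c * star (star u ⬝ᵥ J *ᵥ g)
        + c ^ 2 * (star g ⬝ᵥ J *ᵥ g) := by
    rw [← h1]
    simp only [star_sub, star_smul, Matrix.mulVec_sub, Matrix.mulVec_smul, dotProduct_sub,
      sub_dotProduct, smul_dotProduct, dotProduct_smul, smul_eq_mul, Complex.star_def,
      Complex.conj_ofReal]
    ring
  rw [h2] at h0
  have h3 : ((c : ℂ) ^ 2 * (star g ⬝ᵥ J *ᵥ g)).re = c ^ 2 * (star g ⬝ᵥ J *ᵥ g).re := by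
    rw [← Complex.ofReal_pow, Complex.re_ofReal_mul]
  simp only [RCLike.re_eq_complex_re, Complex.add_re, Complex.sub_re, Complex.re_ofReal_mul,
    Complex.star_def, Complex.conj_re, h3] at h0
  linarith

lemma wmmse_user {N : ℕ} (J : Matrix (Fin N) (Fin N) ℂ) (hJ : J.PosDef) (h : Fin N → ℂ)
    (Γm : ℝ) (hΓ : 0 < Γm) :
    (∀ (u : Fin N → ℂ) (ρ : ℝ), 0 < ρ →
      Real.log ρ - ρ * ((star u ⬝ᵥ ((Γm : ℂ) • J + Matrix.vecMulVec h (star h)) *ᵥ u).re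
        - 2 * (star u ⬝ᵥ h).re + 1) + 1 ≤ Real.log (1 + (star h ⬝ᵥ J⁻¹ *ᵥ h).re / Γm)) ∧
    (∃ (u : Fin N → ℂ) (ρ : ℝ), 0 < ρ ∧
      Real.log (1 + (star h ⬝ᵥ J⁻¹ *ᵥ h).re / Γm) =
      Real.log ρ - ρ * ((star u ⬝ᵥ ((Γm : ℂ) • J + Matrix.vecMulVec h (star h)) *ᵥ u).re
        - 2 * (star u ⬝ᵥ h).re + 1) + 1) := by
  obtain ⟨g, hg⟩ : ∃ g, g = J⁻¹ *ᵥ h := ⟨_, rfl⟩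
  have hJg : h = J *ᵥ g := by
    rw [hg, Matrix.mulVec_mulVec, Matrix.mul_nonsing_inv _ ((Matrix.isUnit_iff_isUnit_det _).1 hJ.isUnit),
      Matrix.one_mulVec]
  have hsg : star h ⬝ᵥ g = star g ⬝ᵥ J *ᵥ g := by
    rw [hJg, Matrix.star_mulVec, hJ.isHermitian.eq, Matrix.dotProduct_mulVec]
  have him : (star g ⬝ᵥ J *ᵥ g).im = 0 := by
    have := hJ.posSemidef.dotProduct_mulVec_nonneg g
    exact (Complex.le_def.1 this).2.symm
  have hs0 : 0 ≤ (star g ⬝ᵥ J *ᵥ g).re := hJ.posSemidef.re_dotProduct_nonneg g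
  rw [← hg, hsg]
  simp only [wmmse_e_expand]
  have hq := wmmse_quad J hJ g
  rw [hJg]
  obtain ⟨s, hs⟩ : ∃ s, s = (star g ⬝ᵥ J *ᵥ g).re := ⟨_, rfl⟩
  rw [← hs] at hs0 hq ⊢
  have hGs : 0 < Γm + s := by linarith
  have hpos : 0 < 1 + s / Γm := by positivity
  constructor
  · intro u ρ hρ
    have hq' := hq u (1 / (Γm + s))
    set x := (star u ⬝ᵥ J *ᵥ g).re
    set y := (star u ⬝ᵥ J *ᵥ g).im
    set q := (star u ⬝ᵥ J *ᵥ u).re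
    have he : (1 + s / Γm)⁻¹ ≤ Γm * q + (x ^ 2 + y ^ 2) - 2 * x + 1 := by
      have e1 : (1 + s / Γm)⁻¹ = 1 - s * (1 / (Γm + s)) := by field_simp; ring
      obtain ⟨c, hc⟩ : ∃ c, c = 1 / (Γm + s) := ⟨_, rfl⟩
      rw [e1]
      rw [← hc] at hq' ⊢
      have hc1 : Γm * c = 1 - s * c := by rw [hc]; field_simp; ring
      have h4 := mul_nonneg hΓ.le hq'
      have h5 : Γm * (q - 2 * c * x + c ^ 2 * s) =
          Γm * q - 2 * (Γm * c) * x + (Γm * c) * (c * s) := by ring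
      rw [h5, hc1] at h4
      nlinarith [sq_nonneg (x - s * c), sq_nonneg y]
    have hl := Real.log_le_sub_one_of_pos (mul_pos hρ (inv_pos.2 hpos))
    rw [Real.log_mul hρ.ne' (inv_pos.2 hpos).ne', Real.log_inv] at hl
    have := mul_le_mul_of_nonneg_left he hρ.le
    linarith
  · refine ⟨((1 / (Γm + s) : ℝ) : ℂ) • g, 1 + s / Γm, hpos, ?_⟩
    obtain ⟨c, hc⟩ : ∃ c, c = 1 / (Γm + s) := ⟨_, rfl⟩
    rw [← hc]
    have a1 : star ((c : ℂ) • g) ⬝ᵥ J *ᵥ g = c * (star g ⬝ᵥ J *ᵥ g) := by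
      simp [star_smul, smul_dotProduct]
    have a2 : star ((c : ℂ) • g) ⬝ᵥ J *ᵥ ((c : ℂ) • g) = c * (c * (star g ⬝ᵥ J *ᵥ g)) := by
      simp [star_smul, smul_dotProduct, Matrix.mulVec_smul, dotProduct_smul]
    rw [a1, a2]
    simp only [Complex.re_ofReal_mul, Complex.im_ofReal_mul, him, ← hs]
    rw [hc]
    field_simp
    ring

lemma wmmse_sSup_congr (A B : Set ℝ) (hA : A.Nonempty) (h1 : A ⊆ B)
    (h2 : ∀ b ∈ B, ∃ a ∈ A, b ≤ a) : sSup A = sSup B := by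
  have hub : upperBounds A = upperBounds B := by
    apply Set.Subset.antisymm
    · intro x hx b hb
      obtain ⟨a, ha, hab⟩ := h2 b hb
      exact hab.trans (hx ha)
    · exact upperBounds_mono_set h1
  by_cases hb : BddAbove A
  · have hl := isLUB_csSup hA hb
    have hl' : IsLUB B (sSup A) := by
      unfold IsLUB at hl ⊢
      rwa [← hub]
    exact (hl'.csSup_eq (hA.mono h1)).symm
  · have hb' : ¬ BddAbove B := fun h => hb (h.mono h1)
    rw [Real.sSup_of_not_bddAbove hb, Real.sSup_of_not_bddAbove hb']

/-- Equivalence between the weighted sum rate maximization problem and the weighted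
sum-MSE (WMMSE) problem over any nonempty constraint set `S` of transmit beamformer
tuples: the supremum over `w ∈ S` of `Σ_k α_k R_k(w)` equals the supremum over
`w ∈ S`, receive beamformers `u_k`, and positive MSE weights `ρ_k` of
`Σ_k α_k (log ρ_k - ρ_k e_k(w, u_k) + 1)`. -/
theorem wsr_wmmse_equivalence {K T N : ℕ}
    (H : Fin K → Matrix (Fin N) (Fin T) ℂ)
    (α : Fin K → ℝ) (hα : ∀ k, 0 ≤ α k)
    (σ2 Γm : ℝ) (hσ : 0 < σ2) (hΓm : 0 < Γm) :
    let Jmat : (Fin K → Fin T → ℂ) → Fin K → Matrix (Fin N) (Fin N) ℂ := fun w k =>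
      (∑ j ∈ Finset.univ.erase k,
        Matrix.vecMulVec (H k *ᵥ w j) (star (H k *ᵥ w j))) +
        (σ2 : ℂ) • (1 : Matrix (Fin N) (Fin N) ℂ)
    let V : (Fin K → Fin T → ℂ) → Fin K → Matrix (Fin N) (Fin N) ℂ := fun w k =>
      (Γm : ℂ) • Jmat w k + Matrix.vecMulVec (H k *ᵥ w k) (star (H k *ᵥ w k))
    let e : (Fin K → Fin T → ℂ) → Fin K → (Fin N → ℂ) → ℝ := fun w k u =>
      (star u ⬝ᵥ V w k *ᵥ u).re - 2 * (star u ⬝ᵥ (H k *ᵥ w k)).re + 1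
    let R : (Fin K → Fin T → ℂ) → Fin K → ℝ := fun w k =>
      Real.log (1 + (star (w k) ⬝ᵥ ((H k)ᴴ * (Jmat w k)⁻¹ * H k) *ᵥ w k).re / Γm)
    ∀ S : Set (Fin K → Fin T → ℂ), S.Nonempty →
      sSup {r : ℝ | ∃ w ∈ S, r = ∑ k, α k * R w k} =
        sSup {r : ℝ | ∃ w ∈ S, ∃ (u : Fin K → Fin N → ℂ) (ρ : Fin K → ℝ),
          (∀ k, 0 < ρ k) ∧
          r = ∑ k, α k * (Real.log (ρ k) - ρ k * e w k (u k) + 1)} := by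
  intro Jmat V e R S hS
  have hJ : ∀ w k, (Jmat w k).PosDef := by
    intro w k
    refine Matrix.PosDef.posSemidef_add ?_ ?_
    · exact Matrix.posSemidef_sum _ fun j _ => Matrix.posSemidef_vecMulVec_self_star _
    · exact Matrix.PosDef.one.smul (by exact_mod_cast hσ)
  have hR : ∀ w k, R w k =
      Real.log (1 + (star (H k *ᵥ w k) ⬝ᵥ (Jmat w k)⁻¹ *ᵥ (H k *ᵥ w k)).re / Γm) := by
    intro w k
    simp only [R]
    rw [Matrix.star_mulVec, ← Matrix.dotProduct_mulVec, Matrix.mulVec_mulVec,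
      Matrix.mulVec_mulVec, Matrix.mul_assoc]
  have key := fun w k => wmmse_user (Jmat w k) (hJ w k) (H k *ᵥ w k) Γm hΓm
  apply wmmse_sSup_congr
  · obtain ⟨w, hw⟩ := hS
    exact ⟨_, w, hw, rfl⟩
  · rintro r ⟨w, hw, rfl⟩
    choose u ρ hρ heq using fun k => (key w k).2
    refine ⟨w, hw, u, ρ, hρ, Finset.sum_congr rfl fun k _ => ?_⟩
    rw [hR, heq]
  · rintro r ⟨w, hw, u, ρ, hρ, rfl⟩
    refine ⟨_, ⟨w, hw, rfl⟩, Finset.sum_le_sum fun k _ => ?_⟩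
    refine mul_le_mul_of_nonneg_left ?_ (hα k)
    rw [hR]
    exact (key w k).1 (u k) (ρ k) (hρ k)
end
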